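/- Let n > 4 and let L = H(n) over ℂ with its ℤ-grading. If f ∈ BDer(L)_0 is a super-biderivation of ℤ-degree 0, then f is inner: there exists λ ∈ ℂ such that f(x,y) = λ[x,y] for all x, y ∈ L. -/

import Mathlib

open scoped BigOperators

noncomputable section

namespace CartanSuper

/-- Coordinates of the exterior algebra `Λ(n)` with respect to the monomial basis
`{x_S : S ⊆ {1,…,n}}`. -/
abbrev Lambda (n : ℕ) := Finset (Fin n) → ℂ

/-- Endomorphism algebra of `Λ(n)`. -/
abbrev E (n : ℕ) := Module.End ℂ (Lambda n)

variable (n : ℕ)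

/-- `(−1)^k`. -/
def msign (k : ℕ) : ℂ := (-1 : ℂ) ^ k

/-- The basis monomial `x_S = x_{i₁}⋯x_{i_k}` (indices in increasing order). -/
def mono (S : Finset (Fin n)) : Lambda n := fun T => if T = S then 1 else 0

/-- Number of inversions between `S` and `T`. -/
def inversions (S T : Finset (Fin n)) : ℕ := ((S ×ˢ T).filter fun p => p.2 < p.1).card

/-- The multiplication of `Λ(n)` in coordinates:
`x_S · x_T = (−1)^{inversions} x_{S ∪ T}` for disjoint `S, T` and `0` otherwise. -/
def lmulFun (f g : Lambda n) : Lambda n :=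
  fun U => ∑ S ∈ U.powerset, msign (inversions n S (U \ S)) * f S * g (U \ S)

/-- Left multiplication by an element of `Λ(n)`, as a linear map `Λ(n) →ₗ End Λ(n)`. -/
def mulOp : Lambda n →ₗ[ℂ] E n where
  toFun f :=
    { toFun := lmulFun n f
      map_add' := by
        intro g h; funext U
        simp [lmulFun, mul_add, Finset.sum_add_distrib]
      map_smul' := by
        intro c g; funext U
        simp only [lmulFun, Pi.smul_apply, smul_eq_mul, RingHom.id_apply, Finset.mul_sum]
        exact Finset.sum_congr rfl (by intros; ring) }
  map_add' := by
    intro f g; apply LinearMap.ext; intro h; funext U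
    show lmulFun n (f + g) h U = lmulFun n f h U + lmulFun n g h U
    simp only [lmulFun]
    rw [← Finset.sum_add_distrib]
    exact Finset.sum_congr rfl (by intros; simp [Pi.add_apply]; ring)
  map_smul' := by
    intro c f; apply LinearMap.ext; intro h; funext U
    show lmulFun n (c • f) h U = (c • lmulFun n f h) U
    simp only [lmulFun, Pi.smul_apply, smul_eq_mul, Finset.mul_sum]
    exact Finset.sum_congr rfl (by intros; ring)

/-- The superderivation `∂_i` of `Λ(n)`, in coordinates. -/
def pd (i : Fin n) : E n where
  toFun f := fun S =>
    if i ∈ S then 0 else msign (S.filter (· < i)).card * f (insert i S)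
  map_add' := by
    intro f g; funext S; by_cases h : i ∈ S <;> simp [h, mul_add]
  map_smul' := by
    intro c f; funext S; by_cases h : i ∈ S <;> simp [h] <;> ring

/-- The parity operator `σ` of `Λ(n)`: `σ(x_S) = (−1)^{|S|} x_S`. -/
def par : E n where
  toFun f := fun S => msign S.card * f S
  map_add' := by intro f g; funext S; simp [mul_add]
  map_smul' := by intro c f; funext S; simp; ring

/-- The super-commutator `[D,F] = D∘F − (−1)^{|D||F|} F∘D`, extended bilinearly to all of
`End Λ(n)` using the parity operator `σ`
(for homogeneous `D`, `σ∘D∘σ = (−1)^{|D|} D`). -/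
def sbFun (D F : E n) : E n :=
  D * F - (2:ℂ)⁻¹ • ((F + par n * F * par n) * D + (F - par n * F * par n) * (par n * D * par n))

/-- The super-commutator as a bilinear map. -/
def sbL : E n →ₗ[ℂ] E n →ₗ[ℂ] E n :=
  LinearMap.mk₂ ℂ (sbFun n)
    (fun D D' F => by
      simp only [sbFun, add_mul, sub_mul, mul_add, mul_sub, smul_mul_assoc, mul_smul_comm,
        smul_add, smul_sub]
      module)
    (fun c D F => by
      simp only [sbFun, add_mul, sub_mul, mul_add, mul_sub, smul_mul_assoc, mul_smul_comm,
        smul_add, smul_sub]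
      module)
    (fun D F F' => by
      simp only [sbFun, add_mul, sub_mul, mul_add, mul_sub, smul_mul_assoc, mul_smul_comm,
        smul_add, smul_sub]
      module)
    (fun c D F => by
      simp only [sbFun, add_mul, sub_mul, mul_add, mul_sub, smul_mul_assoc, mul_smul_comm,
        smul_add, smul_sub]
      module)

/-- Shorthand for the super-commutator. -/
def sb (D F : E n) : E n := sbL n D F

/-- The ℤ₂-homogeneous component of `Λ(n)` of parity `p`. -/
def lpar (p : ZMod 2) : Submodule ℂ (Lambda n) where
  carrier := {f | ∀ S : Finset (Fin n), (S.card : ZMod 2) ≠ p → f S = 0}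
  add_mem' := by intro f g hf hg S hS; simp [Pi.add_apply, hf S hS, hg S hS]
  zero_mem' := by intro S hS; rfl
  smul_mem' := by intro c f hf S hS; simp [Pi.smul_apply, hf S hS]

/-- The ℤ-homogeneous component of `Λ(n)` of degree `m` (zero unless `0 ≤ m ≤ n`). -/
def ldeg (m : ℤ) : Submodule ℂ (Lambda n) where
  carrier := {f | ∀ S : Finset (Fin n), (S.card : ℤ) ≠ m → f S = 0}
  add_mem' := by intro f g hf hg S hS; simp [Pi.add_apply, hf S hS, hg S hS]
  zero_mem' := by intro S hS; rfl
  smul_mem' := by intro c f hf S hS; simp [Pi.smul_apply, hf S hS]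

/-- Endomorphisms of `Λ(n)` that are ℤ₂-homogeneous of parity `p`. -/
def epar (p : ZMod 2) : Submodule ℂ (E n) where
  carrier := {D | ∀ (q : ZMod 2), ∀ f ∈ lpar n q, D f ∈ lpar n (q + p)}
  add_mem' := by
    intro D F hD hF q f hf
    simpa [LinearMap.add_apply] using (lpar n (q + p)).add_mem (hD q f hf) (hF q f hf)
  zero_mem' := by intro q f hf; simpa using (lpar n (q + p)).zero_mem
  smul_mem' := by
    intro c D hD q f hf
    simpa [LinearMap.smul_apply] using (lpar n (q + p)).smul_mem c (hD q f hf)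

/-- Endomorphisms of `Λ(n)` that are ℤ-homogeneous of degree `d`. -/
def edeg (d : ℤ) : Submodule ℂ (E n) where
  carrier := {D | ∀ (m : ℤ), ∀ f ∈ ldeg n m, D f ∈ ldeg n (m + d)}
  add_mem' := by
    intro D F hD hF m f hf
    simpa [LinearMap.add_apply] using (ldeg n (m + d)).add_mem (hD m f hf) (hF m f hf)
  zero_mem' := by intro m f hf; simpa using (ldeg n (m + d)).zero_mem
  smul_mem' := by
    intro c D hD m f hf
    simpa [LinearMap.smul_apply] using (ldeg n (m + d)).smul_mem c (hD m f hf)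

/-- The linear map `(f₁,…,f_n) ↦ ∑ᵢ fᵢ ∂ᵢ`. -/
def Wmap : (Fin n → Lambda n) →ₗ[ℂ] E n where
  toFun F := ∑ i, mulOp n (F i) * pd n i
  map_add' := by
    intro F G
    simp only [Pi.add_apply, map_add, add_mul, Finset.sum_add_distrib]
  map_smul' := by
    intro c F
    simp only [RingHom.id_apply, Pi.smul_apply, map_smul, smul_mul_assoc, Finset.smul_sum]

/-- The divergence `(f₁,…,f_n) ↦ ∑ᵢ ∂ᵢ(fᵢ)`. -/
def divMap : (Fin n → Lambda n) →ₗ[ℂ] Lambda n where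
  toFun F := ∑ i, pd n i (F i)
  map_add' := by
    intro F G
    simp only [Pi.add_apply, map_add, Finset.sum_add_distrib]
  map_smul' := by
    intro c F
    simp only [RingHom.id_apply, Pi.smul_apply, map_smul, Finset.smul_sum]

/-- The Witt type Lie superalgebra `W(n) = {∑ fᵢ∂ᵢ : fᵢ ∈ Λ(n)}`. -/
def Wn : Submodule ℂ (E n) := LinearMap.range (Wmap n)

/-- Divergence-free coefficient tuples. -/
def divFree : Submodule ℂ (Fin n → Lambda n) := LinearMap.ker (divMap n)

/-- The special type Lie superalgebra `S(n) = {∑ fᵢ∂ᵢ : ∑ ∂ᵢ(fᵢ) = 0}`. -/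
def Sn : Submodule ℂ (E n) := (divFree n).map (Wmap n)

/-- The top monomial `ω = x₁x₂⋯x_n`. -/
def omegaTop : Lambda n := mono n Finset.univ

/-- `1 − x₁x₂⋯x_n`. -/
def oneM : Lambda n := mono n ∅ - omegaTop n

/-- Multiplication of every coefficient by `1 − x₁⋯x_n`. -/
def oneMScale : (Fin n → Lambda n) →ₗ[ℂ] (Fin n → Lambda n) :=
  LinearMap.pi fun i => (mulOp n (oneM n)) ∘ₗ LinearMap.proj i

/-- The Lie superalgebra `S̃(n) = {(1−x₁⋯x_n)∑ fᵢ∂ᵢ : ∑ ∂ᵢ(fᵢ) = 0}` (`n` even). -/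
def Stn : Submodule ℂ (E n) := (divFree n).map (Wmap n ∘ₗ oneMScale n)

/-- The conjugate index `i'`. -/
def cidx (i : Fin n) : Fin n :=
  ⟨if i.val < n / 2 then i.val + n / 2 else if i.val < 2 * (n / 2) then i.val - n / 2 else i.val,
   by have := i.isLt; split_ifs <;> omega⟩

/-- The linear map `f ↦ D_H(f) = (−1)^{|f|} ∑ᵢ ∂ᵢ(f)∂_{i'}` (the sign is implemented by the
parity operator `σ`, so that this is a single linear map agreeing with `D_H` on homogeneous
elements). -/
def DHmap : Lambda n →ₗ[ℂ] E n where
  toFun f := ∑ i, mulOp n (pd n i (par n f)) * pd n (cidx n i)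
  map_add' := by
    intro f g
    simp only [map_add, add_mul, Finset.sum_add_distrib]
  map_smul' := by
    intro c f
    simp only [RingHom.id_apply, map_smul, smul_mul_assoc, Finset.smul_sum]

/-- Evaluation of the top coefficient. -/
def evalTop : Lambda n →ₗ[ℂ] ℂ := LinearMap.proj Finset.univ

/-- The Hamiltonian Lie superalgebra `H(n) = {D_H(f) : f ∈ ⊕_{i=0}^{n−1} Λ(n)_i}`. -/
def Hn : Submodule ℂ (E n) := (LinearMap.ker (evalTop n)).map (DHmap n)

/-- `H̃(n) = {D_H(f) : f ∈ Λ(n)}`. -/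
def HtN : Submodule ℂ (E n) := LinearMap.range (DHmap n)

/-- The degree derivation `𝒞 = ∑ᵢ xᵢ∂ᵢ`. -/
def CC : E n := ∑ i, mulOp n (mono n {i}) * pd n i

/-- The span of the diagonal elements `xᵢ∂ᵢ`. -/
def diagSpan : Submodule ℂ (E n) :=
  Submodule.span ℂ (Set.range fun i : Fin n => mulOp n (mono n {i}) * pd n i)

/-- The four families of Cartan type Lie superalgebras. -/
inductive CT | W | S | St | H
deriving DecidableEq

/-- Validity of the parameter `n` for each family. -/
def CT.valid : CT → ℕ → Prop
  | .W, n => 4 ≤ n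
  | .S, n => 4 ≤ n
  | .St, n => 4 ≤ n ∧ Even n
  | .H, n => 4 < n

/-- The Cartan type Lie superalgebra `L` itself. -/
def CT.algebra : CT → (n : ℕ) → Submodule ℂ (E n)
  | .W, n => Wn n
  | .S, n => Sn n
  | .St, n => Stn n
  | .H, n => Hn n

/-- The extended algebra `L'`: `L' = L` for `W(n)` and `S̃(n)`, `L' = S(n) ⊕ ℂ𝒞` for `S(n)`,
and `L' = H̃(n) ⊕ ℂ𝒞` for `H(n)`. -/
def CT.prime : CT → (n : ℕ) → Submodule ℂ (E n)
  | .W, n => Wn n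
  | .S, n => Sn n ⊔ Submodule.span ℂ {CC n}
  | .St, n => Stn n
  | .H, n => HtN n ⊔ Submodule.span ℂ {CC n}

/-- The top degree `ξ_L` of the ℤ-grading. -/
def CT.xi : CT → (n : ℕ) → ℤ
  | .W, n => (n : ℤ) - 1
  | .S, n => (n : ℤ) - 2
  | .St, n => (n : ℤ) - 2
  | .H, n => (n : ℤ) - 3

/-- The ℤ-grading component `L_j = L ∩ W(n)_j`; for `S̃(n)` the component of degree `−1`
is `span{(1−x₁⋯x_n)∂ᵢ}` instead. -/
def CT.grade (t : CT) (n : ℕ) (j : ℤ) : Submodule ℂ (E n) :=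
  match t with
  | .St =>
      if j = -1 then
        Submodule.span ℂ (Set.range fun i : Fin n => mulOp n (oneM n) * pd n i)
      else Stn n ⊓ edeg n j
  | t => t.algebra n ⊓ edeg n j

/-- The ℤ-grading component `L'_j` of the extended algebra `L'`. -/
def CT.grade' (t : CT) (n : ℕ) (j : ℤ) : Submodule ℂ (E n) :=
  match t with
  | .St => CT.grade .St n j
  | t => t.prime n ⊓ edeg n j

/-- The standard Cartan subalgebra `H_L` of `L`: the part of the diagonal
`span{xᵢ∂ᵢ}` lying in `L`. -/
def CT.cartan (t : CT) (n : ℕ) : Submodule ℂ (E n) := t.algebra n ⊓ diagSpan n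

/-- The weight space of `M ⊆ End Λ(n)` of weight `μ ∈ H_L^*` under the adjoint action
of the standard Cartan subalgebra of `L`. -/
def wtsp (t : CT) (n : ℕ) (M : Submodule ℂ (E n)) (μ : Module.Dual ℂ (t.cartan n)) :
    Submodule ℂ (E n) where
  carrier := {x | x ∈ M ∧ ∀ h : t.cartan n, sbL n h x = μ h • x}
  add_mem' := by
    rintro x y ⟨hx, hx'⟩ ⟨hy, hy'⟩
    exact ⟨M.add_mem hx hy, fun h => by simp [map_add, hx' h, hy' h, smul_add]⟩
  zero_mem' := ⟨M.zero_mem, fun h => by simp⟩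
  smul_mem' := by
    rintro c x ⟨hx, hx'⟩
    exact ⟨M.smul_mem c hx, fun h => by simp [map_smul, hx' h, smul_comm c]⟩

/-- The set of roots of `M` with respect to the standard Cartan subalgebra of `L`:
the nonzero weights with nonzero weight space. -/
def CT.roots (t : CT) (n : ℕ) (M : Submodule ℂ (E n)) : Set (Module.Dual ℂ (t.cartan n)) :=
  {ε | ε ≠ 0 ∧ wtsp t n M ε ≠ ⊥}

/-- The sign `(−1)^p` for `p ∈ ℤ₂`. -/
def sgn (p : ZMod 2) : ℂ := (-1 : ℂ) ^ p.val

/-- `f` is a super-biderivation of `L` of ℤ₂-degree `pf`: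
a bilinear map with `f(L_α, L_β) ⊆ L_{α+β+pf}` satisfying
`f([x,y],z) = (−1)^{|x||f|}[x,f(y,z)] + (−1)^{|y||z|}[f(x,z),y]` and
`f(x,[y,z]) = [f(x,y),z] + (−1)^{(|f|+|x|)|y|}[y,f(x,z)]` for homogeneous `x,y,z ∈ L`.
(The bilinear map is given as a bilinear map on the ambient space `End Λ(n)`;
only its restriction to `L` is relevant.) -/
structure IsSuperBider (L : Submodule ℂ (E n)) (pf : ZMod 2)
    (f : E n →ₗ[ℂ] E n →ₗ[ℂ] E n) : Prop where
  maps : ∀ (α β : ZMod 2), ∀ x ∈ L ⊓ epar n α, ∀ y ∈ L ⊓ epar n β,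
    f x y ∈ L ⊓ epar n (α + β + pf)
  eq1 : ∀ (α β γ : ZMod 2), ∀ x ∈ L ⊓ epar n α, ∀ y ∈ L ⊓ epar n β, ∀ z ∈ L ⊓ epar n γ,
    f (sbL n x y) z = sgn (α * pf) • sbL n x (f y z) + sgn (β * γ) • sbL n (f x z) y
  eq2 : ∀ (α β γ : ZMod 2), ∀ x ∈ L ⊓ epar n α, ∀ y ∈ L ⊓ epar n β, ∀ z ∈ L ⊓ epar n γ,
    f x (sbL n y z) = sbL n (f x y) z + sgn ((pf + α) * β) • sbL n y (f x z)

/-- `D` is a superderivation of `L` of ℤ₂-degree `p`: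
`D(L_α) ⊆ L_{α+p}` and `D([x,y]) = [D(x),y] + (−1)^{|D||x|}[x,D(y)]` for homogeneous
`x, y ∈ L`. (Given as a linear map on the ambient space `End Λ(n)`.) -/
structure IsSuperDer (L : Submodule ℂ (E n)) (p : ZMod 2)
    (D : E n →ₗ[ℂ] E n) : Prop where
  maps : ∀ (α : ZMod 2), ∀ x ∈ L ⊓ epar n α, D x ∈ L ⊓ epar n (α + p)
  leib : ∀ (α β : ZMod 2), ∀ x ∈ L ⊓ epar n α, ∀ y ∈ L ⊓ epar n β,
    D (sbL n x y) = sbL n (D x) y + sgn (p * α) • sbL n x (D y)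

/-- `f ∈ BDer(L)_ε`: the super-biderivation `f` has weight `ε ∈ H_L^*`, i.e.
`f(L_η, L_ζ) ⊆ L_{ε+η+ζ}` for all weights `η, ζ`. -/
def CT.HasWeight (t : CT) (n : ℕ) (f : E n →ₗ[ℂ] E n →ₗ[ℂ] E n)
    (ε : Module.Dual ℂ (t.cartan n)) : Prop :=
  ∀ (η ζ : Module.Dual ℂ (t.cartan n)),
    ∀ x ∈ wtsp t n (t.algebra n) η, ∀ y ∈ wtsp t n (t.algebra n) ζ,
      f x y ∈ wtsp t n (t.algebra n) (ε + η + ζ)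

/-- `f ∈ BDer(L)_i`: the super-biderivation `f` has ℤ-degree `i`, i.e.
`f(L_j, L_k) ⊆ L_{i+j+k}` for all `j, k ∈ ℤ`. -/
def CT.HasDeg (t : CT) (n : ℕ) (f : E n →ₗ[ℂ] E n →ₗ[ℂ] E n) (i : ℤ) : Prop :=
  ∀ (j k : ℤ), ∀ x ∈ t.grade n j, ∀ y ∈ t.grade n k, f x y ∈ t.grade n (i + j + k)

/-!
In an orthonormal frame, `H(n)_{-1}` is the vector space `ℂⁿ` and `H(n)_0` is `𝔰𝔬(n)` acting on it,
spanned by the rotations `R_ij`. Parity is the ℤ-degree modulo 2, so a nonzero `f` of ℤ-degree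
zero is even. Bracketing with a rotation shows that the maps `f(R_ij, ·)` on `ℂⁿ`
form a cocycle with values in matrices; antisymmetry forces it to be `R_ij T` for a single
matrix `T`, and likewise `f(·, R_ij)` is `R_ij S`. Expanding `f([R, v], R')` and `f(R, [R', v])`
through `[f(R, R'), v]` links `T` to `S` and leaves only `T = λ`, `S = -λ`. Hence `f - λ[·,·]`
vanishes in negative total degree, and the transitivity of `H(n)` (an element of nonnegative degree
commuting with all `∂_i` is zero) propagates this to all degrees.
-/

section ExteriorCalculus

variable {n}

lemma msign_add (a b : ℕ) : msign (a + b) = msign a * msign b := pow_add _ _ _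

lemma msign_succ (a : ℕ) : msign (a + 1) = -msign a := by simp [msign, pow_succ]

lemma msign_mul_self (a : ℕ) : msign a * msign a = 1 := by
  rw [← msign_add, msign, Even.neg_one_pow ⟨a, rfl⟩]

lemma mulOp_apply (f g : Lambda n) (U : Finset (Fin n)) :
    mulOp n f g U = ∑ S ∈ U.powerset, msign (inversions n S (U \ S)) * f S * g (U \ S) := rfl

lemma pd_apply (i : Fin n) (f : Lambda n) (S : Finset (Fin n)) :
    pd n i f S = if i ∈ S then 0 else msign (S.filter (· < i)).card * f (insert i S) := rfl

lemma par_apply (f : Lambda n) (S : Finset (Fin n)) : par n f S = msign S.card * f S := rfl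

lemma inversions_eq_sum (S T : Finset (Fin n)) :
    inversions n S T = ∑ s ∈ S, ∑ t ∈ T, if t < s then 1 else 0 := by
  rw [inversions, Finset.card_filter, Finset.sum_product]

lemma inversions_insert_left {S : Finset (Fin n)} (T : Finset (Fin n)) {i : Fin n} (hi : i ∉ S) :
    inversions n (insert i S) T = inversions n S T + (T.filter (· < i)).card := by
  rw [inversions_eq_sum, inversions_eq_sum, Finset.sum_insert hi, Finset.card_filter, add_comm]

lemma inversions_insert_right (S : Finset (Fin n)) {T : Finset (Fin n)} {i : Fin n} (hi : i ∉ T) :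
    inversions n S (insert i T) = inversions n S T + (S.filter (i < ·)).card := by
  simp only [inversions_eq_sum, Finset.sum_insert hi, Finset.sum_add_distrib, Finset.card_filter,
    add_comm]

lemma card_eq_card_filter_lt_add_card_filter_gt {S : Finset (Fin n)} {i : Fin n} (hi : i ∉ S) :
    S.card = (S.filter (· < i)).card + (S.filter (i < ·)).card := by
  rw [← Finset.card_filter_add_card_filter_not (s := S) (· < i)]
  congr 2
  refine Finset.filter_congr fun x hx => ?_
  rw [not_lt, le_iff_lt_or_eq, or_iff_left]
  rintro rfl
  exact hi hx

lemma card_filter_eq_add_card_filter_sdiff {S U : Finset (Fin n)} (h : S ⊆ U)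
    (p : Fin n → Prop) [DecidablePred p] :
    (U.filter p).card = (S.filter p).card + ((U \ S).filter p).card := by
  rw [← Finset.card_union_of_disjoint
    (Finset.disjoint_filter_filter Finset.disjoint_sdiff), ← Finset.filter_union,
    Finset.union_sdiff_of_subset h]

lemma mulOp_apply_insert (f g : Lambda n) {i : Fin n} {V : Finset (Fin n)} (hi : i ∉ V) :
    mulOp n f g (insert i V) = ∑ S ∈ V.powerset, msign (inversions n S (V \ S)) *
      (msign (S.filter (i < ·)).card * f S * g (insert i (V \ S)) +
        msign ((V \ S).filter (· < i)).card * f (insert i S) * g (V \ S)) := by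
  rw [mulOp_apply, Finset.sum_powerset_insert hi, ← Finset.sum_add_distrib]
  refine Finset.sum_congr rfl fun S hS => ?_
  have hiS : i ∉ S := fun h => hi (Finset.mem_powerset.mp hS h)
  have hiVS : i ∉ V \ S := fun h => hi (Finset.mem_sdiff.mp h).1
  rw [Finset.insert_sdiff_of_notMem _ hiS, Finset.insert_sdiff_insert,
    Finset.sdiff_insert_of_notMem hi, inversions_insert_left _ hiS,
    inversions_insert_right _ hiVS, msign_add, msign_add]
  ring

lemma pd_mulOp_apply (i : Fin n) (f g : Lambda n) :
    pd n i (mulOp n f g) = mulOp n (pd n i f) g + mulOp n (par n f) (pd n i g) := by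
  funext U
  rw [Pi.add_apply]
  by_cases hi : i ∈ U
  · obtain ⟨V, hV, rfl⟩ : ∃ V, i ∉ V ∧ insert i V = U :=
      ⟨U.erase i, Finset.notMem_erase _ _, Finset.insert_erase hi⟩
    rw [pd_apply, if_pos hi, mulOp_apply_insert _ _ hV, mulOp_apply_insert _ _ hV,
      ← Finset.sum_add_distrib]
    refine (Finset.sum_eq_zero fun S hS => ?_).symm
    have hiS : i ∉ S := fun h => hV (Finset.mem_powerset.mp hS h)
    have hiVS : i ∉ V \ S := fun h => hV (Finset.mem_sdiff.mp h).1
    simp only [pd_apply, par_apply, hiS, hiVS, Finset.mem_insert_self, if_true, if_false,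
      Finset.card_insert_of_notMem hiS, msign_succ,
      card_eq_card_filter_lt_add_card_filter_gt hiS, msign_add]
    linear_combination (-msign (inversions n S (V \ S)) * msign (S.filter (· < i)).card *
      msign (S.filter (i < ·)).card * f (insert i S) * g (insert i (V \ S))) *
        msign_mul_self ((V \ S).filter (· < i)).card
  · rw [pd_apply, if_neg hi, mulOp_apply_insert _ _ hi, mulOp_apply, mulOp_apply,
      ← Finset.sum_add_distrib, Finset.mul_sum]
    refine Finset.sum_congr rfl fun S hS => ?_
    have hiS : i ∉ S := fun h => hi (Finset.mem_powerset.mp hS h)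
    have hiUS : i ∉ U \ S := fun h => hi (Finset.mem_sdiff.mp h).1
    simp only [pd_apply, par_apply, hiS, hiUS, if_false,
      card_filter_eq_add_card_filter_sdiff (Finset.mem_powerset.mp hS) (· < i),
      card_eq_card_filter_lt_add_card_filter_gt hiS, msign_add]
    linear_combination (msign (inversions n S (U \ S)) * msign (S.filter (· < i)).card *
      f (insert i S) * g (U \ S)) * msign_mul_self ((U \ S).filter (· < i)).card

lemma pd_pd_apply (i j : Fin n) (f : Lambda n) : pd n i (pd n j f) = -pd n j (pd n i f) := by
  wlog h : i ≤ j generalizing i j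
  · rw [this j i (le_of_not_ge h), neg_neg]
  funext U
  rw [Pi.neg_apply]
  rcases h.eq_or_lt with rfl | hij
  · simp [pd_apply]
  by_cases hi : i ∈ U
  · simp [pd_apply, hi]
  by_cases hj : j ∈ U
  · simp [pd_apply, hj]
  have hi' : i ∉ U.filter (· < j) := fun h => hi (Finset.mem_filter.mp h).1
  simp only [pd_apply, Finset.mem_insert, hi, hj, hij.ne, hij.ne', or_self, if_false,
    Finset.filter_insert, hij, hij.not_gt, if_true, Finset.card_insert_of_notMem hi', msign_succ,
    Finset.insert_comm j i]
  ring

lemma par_par_apply (f : Lambda n) : par n (par n f) = f := by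
  funext U
  rw [par_apply, par_apply, ← mul_assoc, msign_mul_self, one_mul]

lemma par_pd_apply (i : Fin n) (f : Lambda n) : par n (pd n i f) = -pd n i (par n f) := by
  funext U
  by_cases hi : i ∈ U
  · simp [par_apply, pd_apply, hi]
  · simp only [par_apply, pd_apply, Pi.neg_apply, hi, if_false, Finset.card_insert_of_notMem hi,
      msign_succ]
    ring

lemma par_mulOp_apply (f g : Lambda n) : par n (mulOp n f g) = mulOp n (par n f) (par n g) := by
  funext U
  simp only [par_apply, mulOp_apply, Finset.mul_sum]
  refine Finset.sum_congr rfl fun S hS => ?_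
  rw [← Finset.card_sdiff_add_card_eq_card (Finset.mem_powerset.mp hS), msign_add]
  ring

lemma mulOp_mono_mono {S T : Finset (Fin n)} (h : Disjoint S T) :
    mulOp n (mono n S) (mono n T) = msign (inversions n S T) • mono n (S ∪ T) := by
  funext U
  have hU : S ⊆ U ∧ U \ S = T ↔ U = S ∪ T := by
    constructor
    · rintro ⟨hS, rfl⟩
      exact (Finset.union_sdiff_of_subset hS).symm
    · rintro rfl
      exact ⟨Finset.subset_union_left, Finset.union_sdiff_cancel_left h⟩
  simp only [mulOp_apply, mul_right_comm _ (mono n S _)]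
  simp only [mono, mul_ite, mul_one, mul_zero, Finset.sum_ite_eq', Finset.mem_powerset]
  simp only [← ite_and, hU]
  split_ifs with h'
  · rw [(hU.mpr h').2]
    simp [mono, h']
  · simp [mono, h']

lemma mulOp_mono_empty : mulOp n (mono n ∅) = 1 := by
  refine LinearMap.ext fun f => funext fun U => ?_
  rw [mulOp_apply, Finset.sum_eq_single ∅]
  · simp [mono, inversions, msign]
  · intro S _ hS
    simp [mono, hS]
  · simp

lemma mulOp_apply_mono_empty (f : Lambda n) : mulOp n f (mono n ∅) = f := by
  funext U
  rw [mulOp_apply, Finset.sum_eq_single U]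
  · simp [mono, inversions, msign]
  · intro S hS hSU
    have : U \ S ≠ ∅ := fun h =>
      hSU ((Finset.mem_powerset.mp hS).antisymm (Finset.sdiff_eq_empty_iff_subset.mp h))
    simp [mono, this]
  · simp

lemma pd_mono_empty (i : Fin n) : pd n i (mono n ∅) = 0 := by
  funext U
  simp [pd_apply, mono]

lemma pd_mono_single (i j : Fin n) :
    pd n i (mono n {j}) = if i = j then mono n ∅ else 0 := by
  funext U
  rcases U.eq_empty_or_nonempty with rfl | hU
  · by_cases hij : i = j <;> simp [pd_apply, mono, msign, hij]
  · have h : i ∉ U → insert i U ≠ {j} := by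
      intro hi h
      have := congrArg Finset.card h
      rw [Finset.card_insert_of_notMem hi, Finset.card_singleton] at this
      exact hU.card_pos.ne' (by lia)
    by_cases hi : i ∈ U <;> split_ifs <;> simp [pd_apply, mono, hi, h, hU.ne_empty]

end ExteriorCalculus

section Homogeneous

variable {n}

lemma sgn_zero : sgn 0 = 1 := by simp [sgn]

lemma sgn_one : sgn 1 = -1 := by simp [sgn, ZMod.val_one]

lemma sgn_add (a b : ZMod 2) : sgn (a + b) = sgn a * sgn b := by
  rw [sgn, sgn, sgn, ← pow_add, ZMod.val_add, ← neg_one_pow_eq_pow_mod_two]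

lemma sgn_mul_self (a : ZMod 2) : sgn a * sgn a = 1 := by
  rw [← sgn_add, CharTwo.add_self_eq_zero, sgn_zero]

lemma sgn_ne_zero (a : ZMod 2) : sgn a ≠ 0 := left_ne_zero_of_mul_eq_one (sgn_mul_self a)

lemma msign_eq_sgn (k : ℕ) : msign k = sgn k := by
  rw [msign, sgn, ZMod.val_natCast, ← neg_one_pow_eq_pow_mod_two]

lemma eq_sum_mono (f : Lambda n) : f = ∑ S, f S • mono n S := by
  funext T
  simp [Finset.sum_apply, mono]

lemma end_ext_mono {D F : E n} (h : ∀ S, D (mono n S) = F (mono n S)) : D = F := by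
  refine LinearMap.ext fun f => ?_
  rw [eq_sum_mono f]
  simp only [map_sum, map_smul, h]

lemma mono_mem_ldeg (S : Finset (Fin n)) : mono n S ∈ ldeg n S.card := by
  intro T hT
  exact if_neg fun h => hT (congrArg _ (congrArg _ h))

lemma mono_mem_lpar (S : Finset (Fin n)) : mono n S ∈ lpar n S.card := by
  intro T hT
  exact if_neg fun h => hT (congrArg _ (congrArg _ h))

lemma ldeg_le_of_mono_mem {m : ℤ} {M : Submodule ℂ (Lambda n)}
    (h : ∀ S : Finset (Fin n), (S.card : ℤ) = m → mono n S ∈ M) : ldeg n m ≤ M := by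
  intro f hf
  rw [eq_sum_mono f]
  refine M.sum_mem fun S _ => ?_
  by_cases hS : (S.card : ℤ) = m
  · exact M.smul_mem _ (h S hS)
  · rw [hf S hS, zero_smul]
    exact M.zero_mem

lemma eq_smul_mono_empty {f : Lambda n} (hf : ∀ S, S ≠ ∅ → f S = 0) : f = f ∅ • mono n ∅ := by
  funext S
  rcases eq_or_ne S ∅ with rfl | hS
  · simp [mono]
  · simp [mono, hf S hS, hS]

lemma edeg_le_epar (d : ℤ) : edeg n d ≤ epar n d := by
  intro D hD q f hf U hU
  rw [eq_sum_mono f, map_sum, Finset.sum_apply]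
  refine Finset.sum_eq_zero fun S _ => ?_
  rw [map_smul, Pi.smul_apply, smul_eq_mul]
  by_cases hS : (S.card : ZMod 2) = q
  · rw [hD _ _ (mono_mem_ldeg S) U, mul_zero]
    intro h
    apply hU
    rw [← hS, ← Int.cast_natCast U.card, h]
    push_cast
    rfl
  · rw [hf S hS, zero_mul]

lemma eq_zero_of_mem_edeg_of_mem_epar {d : ℤ} {p : ZMod 2} {D : E n} (hD : D ∈ edeg n d)
    (hp : D ∈ epar n p) (hne : p ≠ d) : D = 0 := by
  refine end_ext_mono fun S => funext fun U => ?_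
  by_cases h : (U.card : ZMod 2) = S.card + d
  · exact hp _ _ (mono_mem_lpar S) U fun h' => hne (add_left_cancel (h'.symm.trans h))
  · exact edeg_le_epar d hD _ _ (mono_mem_lpar S) U h

lemma mul_mem_edeg {d e : ℤ} {D F : E n} (hD : D ∈ edeg n d) (hF : F ∈ edeg n e) :
    D * F ∈ edeg n (d + e) := by
  intro m f hf
  rw [add_comm d, ← add_assoc]
  exact hD _ _ (hF _ _ hf)

lemma mul_mem_epar {p q : ZMod 2} {D F : E n} (hD : D ∈ epar n p) (hF : F ∈ epar n q) :
    D * F ∈ epar n (p + q) := by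
  intro m f hf
  rw [add_comm p, ← add_assoc]
  exact hD _ _ (hF _ _ hf)

lemma pd_mem_edeg (i : Fin n) : pd n i ∈ edeg n (-1) := by
  intro m f hf S hS
  rw [pd_apply]
  split_ifs with hi
  · rfl
  · rw [hf, mul_zero]
    rw [Finset.card_insert_of_notMem hi]
    lia

lemma par_mem_ldeg {m : ℤ} {f : Lambda n} (hf : f ∈ ldeg n m) : par n f ∈ ldeg n m := by
  intro S hS
  rw [par_apply, hf S hS, mul_zero]

lemma par_apply_of_mem_lpar {p : ZMod 2} {f : Lambda n} (hf : f ∈ lpar n p) :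
    par n f = sgn p • f := by
  funext S
  rw [par_apply, Pi.smul_apply, smul_eq_mul, msign_eq_sgn]
  by_cases hS : (S.card : ZMod 2) = p
  · rw [hS]
  · rw [hf S hS, mul_zero, mul_zero]

lemma mulOp_mem_edeg {m : ℤ} {f : Lambda n} (hf : f ∈ ldeg n m) : mulOp n f ∈ edeg n m := by
  intro k g hg U hU
  rw [mulOp_apply]
  refine Finset.sum_eq_zero fun S hS => ?_
  by_cases h : (S.card : ℤ) = m
  · rw [hg (U \ S), mul_zero]
    have := Finset.card_sdiff_add_card_eq_card (Finset.mem_powerset.mp hS)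
    lia
  · rw [hf S h, mul_zero, zero_mul]

lemma par_conj {p : ZMod 2} {D : E n} (hD : D ∈ epar n p) : par n * D * par n = sgn p • D := by
  refine end_ext_mono fun S => ?_
  have hS := mono_mem_lpar S
  rw [Module.End.mul_apply, Module.End.mul_apply, par_apply_of_mem_lpar hS, map_smul, map_smul,
    par_apply_of_mem_lpar (hD _ _ hS), smul_smul, sgn_add, ← mul_assoc, sgn_mul_self, one_mul,
    LinearMap.smul_apply]

end Homogeneous

section SuperCommutator

variable {n}

lemma sbL_eq_of_mem_epar {p q : ZMod 2} {D F : E n} (hD : D ∈ epar n p) (hF : F ∈ epar n q) :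
    sbL n D F = D * F - sgn (p * q) • (F * D) := by
  have hsgn : (2 : ℂ)⁻¹ * ((1 + sgn q) + (1 - sgn q) * sgn p) = sgn (p * q) := by
    have hcases : ∀ a : ZMod 2, a = 0 ∨ a = 1 := by decide
    rcases hcases p with rfl | rfl <;> rcases hcases q with rfl | rfl <;>
      simp only [mul_zero, mul_one, sgn_zero, sgn_one] <;> norm_num
  change D * F - (2 : ℂ)⁻¹ • ((F + par n * F * par n) * D +
    (F - par n * F * par n) * (par n * D * par n)) = _
  rw [par_conj hD, par_conj hF, ← hsgn]
  refine LinearMap.ext fun f => ?_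
  simp only [LinearMap.sub_apply, LinearMap.add_apply, LinearMap.smul_apply, Module.End.mul_apply,
    map_smul]
  module

lemma sbL_swap {p q : ZMod 2} {D F : E n} (hD : D ∈ epar n p) (hF : F ∈ epar n q) :
    sbL n F D = -sgn (p * q) • sbL n D F := by
  rw [sbL_eq_of_mem_epar hD hF, sbL_eq_of_mem_epar hF hD, mul_comm q p, smul_sub, smul_smul,
    neg_mul, sgn_mul_self]
  module

lemma sbL_mem_epar {p q : ZMod 2} {D F : E n} (hD : D ∈ epar n p) (hF : F ∈ epar n q) :
    sbL n D F ∈ epar n (p + q) := by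
  rw [sbL_eq_of_mem_epar hD hF]
  exact Submodule.sub_mem _ (mul_mem_epar hD hF)
    (Submodule.smul_mem _ _ (add_comm q p ▸ mul_mem_epar hF hD))

lemma sbL_mem_edeg {d e : ℤ} {D F : E n} (hD : D ∈ edeg n d) (hF : F ∈ edeg n e) :
    sbL n D F ∈ edeg n (d + e) := by
  rw [sbL_eq_of_mem_epar (edeg_le_epar d hD) (edeg_le_epar e hF)]
  exact Submodule.sub_mem _ (mul_mem_edeg hD hF)
    (Submodule.smul_mem _ _ (add_comm e d ▸ mul_mem_edeg hF hD))

lemma sbL_mono_empty {p q : ZMod 2} {D F : E n} (hD : D ∈ epar n p) (hF : F ∈ epar n q)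
    (hD1 : D (mono n ∅) = 0) (hF1 : F (mono n ∅) = 0) : sbL n D F (mono n ∅) = 0 := by
  rw [sbL_eq_of_mem_epar hD hF]
  simp [hD1, hF1]

lemma sbL_sbL_right {p q r : ZMod 2} {x y z : E n} (hx : x ∈ epar n p) (hy : y ∈ epar n q)
    (hz : z ∈ epar n r) :
    sbL n x (sbL n y z) = sbL n (sbL n x y) z + sgn (p * q) • sbL n y (sbL n x z) := by
  rw [sbL_eq_of_mem_epar hx (sbL_mem_epar hy hz), sbL_eq_of_mem_epar (sbL_mem_epar hx hy) hz,
    sbL_eq_of_mem_epar hy (sbL_mem_epar hx hz), sbL_eq_of_mem_epar hx hy,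
    sbL_eq_of_mem_epar hy hz, sbL_eq_of_mem_epar hx hz]
  simp only [mul_add, add_mul, sgn_add, mul_sub, sub_mul, smul_sub, smul_smul, smul_mul_assoc,
    mul_smul_comm, mul_assoc]
  rw [mul_comm q p]
  have hsq := sgn_mul_self (p * q)
  match_scalars
  · ring
  · linear_combination sgn (q * r) * hsq
  · ring
  · ring
  · ring
  · linear_combination (-sgn (p * r) * sgn (q * r)) * hsq

lemma sbL_sbL_left {p q r : ZMod 2} {x y z : E n} (hx : x ∈ epar n p) (hy : y ∈ epar n q)
    (hz : z ∈ epar n r) :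
    sbL n (sbL n x y) z = sbL n x (sbL n y z) + sgn (q * r) • sbL n (sbL n x z) y := by
  rw [sbL_sbL_right hx hy hz, sbL_swap (sbL_mem_epar hx hz) hy, add_mul, sgn_add, smul_smul,
    mul_comm r q]
  have hsq := sgn_mul_self (p * q)
  match_scalars
  · ring
  · linear_combination sgn (q * r) * hsq

lemma sbL_pd_apply (i : Fin n) (F : E n) (f : Lambda n) :
    sbL n (pd n i) F f = pd n i (F f) - par n (F (par n (pd n i f))) := by
  change (pd n i * F - (2 : ℂ)⁻¹ • ((F + par n * F * par n) * pd n i +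
    (F - par n * F * par n) * (par n * pd n i * par n))) f = _
  simp only [LinearMap.sub_apply, LinearMap.add_apply, LinearMap.smul_apply, Module.End.mul_apply,
    par_pd_apply i (par n f), par_par_apply, map_neg]
  module

lemma DHmap_apply (g f : Lambda n) :
    DHmap n g f = ∑ k, mulOp n (pd n k (par n g)) (pd n (cidx n k) f) := by
  simp [DHmap]

lemma sbL_pd_DHmap (i : Fin n) (g : Lambda n) :
    sbL n (pd n i) (DHmap n g) = DHmap n (pd n i g) := by
  refine LinearMap.ext fun f => ?_
  simp only [sbL_pd_apply, DHmap_apply, map_sum, ← Finset.sum_sub_distrib]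
  refine Finset.sum_congr rfl fun k _ => ?_
  have hg : pd n i (pd n k (par n g)) = pd n k (par n (pd n i g)) := by
    rw [pd_pd_apply, par_pd_apply, map_neg]
  have hf : par n (pd n (cidx n k) (par n (pd n i f))) = pd n i (pd n (cidx n k) f) := by
    rw [par_pd_apply, par_par_apply, pd_pd_apply, neg_neg]
  rw [pd_mulOp_apply, par_mulOp_apply, hg, hf, add_sub_cancel_right]

lemma DHmap_apply_mono_empty (g : Lambda n) : DHmap n g (mono n ∅) = 0 := by
  simp [DHmap_apply, pd_mono_empty]

lemma DHmap_mem_edeg {m : ℤ} {g : Lambda n} (hg : g ∈ ldeg n m) :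
    DHmap n g ∈ edeg n (m - 2) := by
  refine (edeg n (m - 2)).sum_mem fun k _ => ?_
  have hk : pd n k (par n g) ∈ ldeg n (m + -1) := pd_mem_edeg k _ _ (par_mem_ldeg hg)
  have := mul_mem_edeg (mulOp_mem_edeg hk) (pd_mem_edeg (cidx n k))
  rwa [show m + -1 + -1 = m - 2 by ring] at this

lemma apply_eq_zero_of_pd_apply_erase {f : Lambda n} {k : Fin n} {S : Finset (Fin n)}
    (hk : k ∈ S) (hf : pd n k f (S.erase k) = 0) : f S = 0 := by
  rw [pd_apply, if_neg (Finset.notMem_erase _ _), Finset.insert_erase hk] at hf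
  exact (mul_eq_zero.mp hf).resolve_left (left_ne_zero_of_mul_eq_one (msign_mul_self _))

lemma eq_zero_of_sbL_pd_eq_zero {d : ℤ} (hd : 0 ≤ d) {D : E n} (hD : D ∈ edeg n d)
    (hD1 : D (mono n ∅) = 0) (hpd : ∀ k, sbL n (pd n k) D = 0) : D = 0 := by
  have key : ∀ m : ℕ, ∀ f ∈ ldeg n m, D f = 0 := by
    intro m
    induction m with
    | zero =>
      intro f hf
      rw [eq_smul_mono_empty fun S hS => hf S (by simpa using hS), map_smul, hD1, smul_zero]
    | succ m ih =>
      intro f hf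
      have hk : ∀ k, pd n k (D f) = 0 := by
        intro k
        have hkf : par n (pd n k f) ∈ ldeg n m := by
          have := par_mem_ldeg (pd_mem_edeg k _ _ hf)
          rwa [Nat.cast_succ, add_neg_cancel_right] at this
        have := congrArg (fun F : E n => F f) (hpd k)
        simpa only [sbL_pd_apply, ih _ hkf, map_zero, sub_zero, LinearMap.zero_apply] using this
      funext S
      rcases S.eq_empty_or_nonempty with rfl | ⟨k, hkS⟩
      · exact hD _ _ hf _ (by rw [Finset.card_empty]; push_cast; lia)
      · exact apply_eq_zero_of_pd_apply_erase hkS (congrFun (hk k) _)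
  exact end_ext_mono fun S => key _ _ (mono_mem_ldeg S)

end SuperCommutator

section Hamiltonian

variable {n}

lemma cidx_cidx (i : Fin n) : cidx n (cidx n i) = i := by
  apply Fin.ext
  simp only [cidx]
  split_ifs <;> lia

lemma par_mono_empty : par n (mono n ∅) = mono n ∅ := by
  simpa [sgn_zero] using par_apply_of_mem_lpar (mono_mem_lpar (∅ : Finset (Fin n)))

lemma par_mono_single (i : Fin n) : par n (mono n {i}) = -mono n {i} := by
  simpa [sgn_one] using par_apply_of_mem_lpar (mono_mem_lpar ({i} : Finset (Fin n)))

lemma DHmap_apply_mono_single (g : Lambda n) (i : Fin n) :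
    DHmap n g (mono n {i}) = pd n (cidx n i) (par n g) := by
  rw [DHmap_apply, Finset.sum_eq_single (cidx n i)]
  · rw [cidx_cidx, pd_mono_single, if_pos rfl, mulOp_apply_mono_empty]
  · intro k _ hk
    rw [pd_mono_single, if_neg fun h => hk (by rw [← h, cidx_cidx]), map_zero]
  · simp

lemma DHmap_mono_empty : DHmap n (mono n ∅) = 0 := by
  refine LinearMap.ext fun f => ?_
  simp [DHmap_apply, par_mono_empty, pd_mono_empty]

lemma DHmap_mono_single (i : Fin n) : DHmap n (mono n {i}) = -pd n (cidx n i) := by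
  refine LinearMap.ext fun f => ?_
  rw [DHmap_apply, Finset.sum_eq_single i]
  · simp [par_mono_single, pd_mono_single, mulOp_mono_empty]
  · intro k _ hk
    simp [par_mono_single, pd_mono_single, hk]
  · simp

lemma apply_mono_empty_of_mem_Hn {x : E n} (hx : x ∈ Hn n) : x (mono n ∅) = 0 := by
  obtain ⟨g, -, rfl⟩ := hx
  exact DHmap_apply_mono_empty g

lemma sbL_pd_mem_Hn (i : Fin n) {x : E n} (hx : x ∈ Hn n) : sbL n (pd n i) x ∈ Hn n := by
  obtain ⟨g, -, rfl⟩ := hx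
  rw [sbL_pd_DHmap]
  exact ⟨pd n i g, if_pos (Finset.mem_univ i), rfl⟩

lemma DHmap_mono_mem_grade {S : Finset (Fin n)} (hS : S ≠ Finset.univ) :
    DHmap n (mono n S) ∈ CT.H.grade n (S.card - 2) :=
  ⟨⟨mono n S, if_neg hS.symm, rfl⟩, DHmap_mem_edeg (mono_mem_ldeg S)⟩

lemma pd_mem_grade (hn : 1 < n) (i : Fin n) : pd n i ∈ CT.H.grade n (-1) := by
  have hS : ({cidx n i} : Finset (Fin n)) ≠ Finset.univ := fun h => by
    simpa [hn.ne] using congrArg Finset.card h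
  have := DHmap_mono_mem_grade hS
  rw [DHmap_mono_single, cidx_cidx] at this
  simpa using (CT.H.grade n _).neg_mem this

lemma grade_le_epar {d : ℤ} : CT.H.grade n d ≤ Hn n ⊓ epar n d :=
  inf_le_inf_left _ (edeg_le_epar d)

/- The values of `D_H(g)` on the generators are the derivatives of `g`, so a homogeneous `D_H(g)`
determines the degree of `g` up to a constant. -/
lemma exists_DHmap_eq_of_mem_grade {j : ℤ} {x : E n} (hx : x ∈ CT.H.grade n j) :
    ∃ h ∈ ldeg n (j + 2), h ∅ = 0 ∧ h Finset.univ = 0 ∧ DHmap n h = x := by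
  obtain ⟨⟨g, hg : g Finset.univ = 0, rfl⟩, hdeg⟩ := hx
  have hS : ∀ S : Finset (Fin n), S.Nonempty → (S.card : ℤ) ≠ j + 2 → g S = 0 := by
    rintro S ⟨k, hk⟩ hS
    have hval : pd n k (par n g) ∈ ldeg n (1 + j) := by
      have := hdeg _ _ (mono_mem_ldeg {cidx n k})
      rwa [DHmap_apply_mono_single, cidx_cidx, Finset.card_singleton, Nat.cast_one] at this
    have hpar : par n g S = 0 := by
      refine apply_eq_zero_of_pd_apply_erase hk (hval _ ?_)
      have := Finset.card_erase_add_one hk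
      lia
    exact (mul_eq_zero.mp hpar).resolve_left (left_ne_zero_of_mul_eq_one (msign_mul_self _))
  have happly : ∀ S, S.Nonempty → (g - g ∅ • mono n ∅) S = g S := fun S hS => by
    simp [mono, hS.ne_empty]
  have hempty : (g - g ∅ • mono n ∅) ∅ = 0 := by simp [mono]
  refine ⟨g - g ∅ • mono n ∅, fun S hcard => ?_, hempty, ?_, ?_⟩
  · rcases S.eq_empty_or_nonempty with rfl | h
    · exact hempty
    · rw [happly S h, hS S h hcard]
  · rcases (Finset.univ : Finset (Fin n)).eq_empty_or_nonempty with h | h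
    · rw [h, hempty]
    · rw [happly _ h, hg]
  · rw [map_sub, map_smul, DHmap_mono_empty, smul_zero, sub_zero]

lemma eq_zero_of_mem_grade {j : ℤ} {x : E n} (hx : x ∈ CT.H.grade n j)
    (hj : j < -1 ∨ n ≤ j + 2) : x = 0 := by
  obtain ⟨h, hdeg, hempty, huniv, rfl⟩ := exists_DHmap_eq_of_mem_grade hx
  suffices h = 0 by rw [this, map_zero]
  funext S
  rcases S.eq_empty_or_nonempty with rfl | hS
  · exact hempty
  rcases eq_or_ne S Finset.univ with rfl | hS'
  · exact huniv
  refine hdeg S ?_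
  have hpos := hS.card_pos
  have hlt := (Finset.card_lt_iff_ne_univ S).mpr hS'
  rw [Fintype.card_fin] at hlt
  lia

lemma Hn_le_of_grade_le {M : Submodule ℂ (E n)} (h : ∀ j, CT.H.grade n j ≤ M) : Hn n ≤ M := by
  rintro _ ⟨g, hg : g Finset.univ = 0, rfl⟩
  rw [eq_sum_mono g, map_sum]
  refine M.sum_mem fun S _ => ?_
  rw [map_smul]
  rcases eq_or_ne S Finset.univ with rfl | hS
  · rw [hg, zero_smul]
    exact M.zero_mem
  · exact M.smul_mem _ (h _ (DHmap_mono_mem_grade hS))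

lemma apply_apply_eq_zero_of_grade {g : E n →ₗ[ℂ] E n →ₗ[ℂ] E n}
    (h : ∀ j k, ∀ x ∈ CT.H.grade n j, ∀ y ∈ CT.H.grade n k, g x y = 0) :
    ∀ x ∈ Hn n, ∀ y ∈ Hn n, g x y = 0 := by
  intro x hx y hy
  have hleft : ∀ j, CT.H.grade n j ≤ LinearMap.ker (g.flip y) := fun j x hx =>
    Hn_le_of_grade_le (M := LinearMap.ker (g x)) (fun k y hy => h j k x hx y hy) hy
  exact Hn_le_of_grade_le hleft hx

end Hamiltonian

section BiLeibniz

variable {n}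

/-- A bilinear map satisfying the two super-Leibniz rules of an even super-biderivation on `L`;
unlike for `IsSuperBider`, its values may leave `L`. -/
structure IsBiLeibniz (L : Submodule ℂ (E n)) (g : E n →ₗ[ℂ] E n →ₗ[ℂ] E n) : Prop where
  left : ∀ (α β γ : ZMod 2), ∀ x ∈ L ⊓ epar n α, ∀ y ∈ L ⊓ epar n β, ∀ z ∈ L ⊓ epar n γ,
    g (sbL n x y) z = sbL n x (g y z) + sgn (β * γ) • sbL n (g x z) y
  right : ∀ (α β γ : ZMod 2), ∀ x ∈ L ⊓ epar n α, ∀ y ∈ L ⊓ epar n β, ∀ z ∈ L ⊓ epar n γ,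
    g x (sbL n y z) = sbL n (g x y) z + sgn (α * β) • sbL n y (g x z)

lemma IsSuperBider.isBiLeibniz {L : Submodule ℂ (E n)} {f : E n →ₗ[ℂ] E n →ₗ[ℂ] E n}
    (hf : IsSuperBider n L 0 f) : IsBiLeibniz L f where
  left α β γ x hx y hy z hz := by
    simpa [sgn_zero] using hf.eq1 α β γ x hx y hy z hz
  right α β γ x hx y hy z hz := by
    simpa using hf.eq2 α β γ x hx y hy z hz

lemma isBiLeibniz_sbL (L : Submodule ℂ (E n)) : IsBiLeibniz L (sbL n) where
  left _ _ _ _ hx _ hy _ hz := sbL_sbL_left hx.2 hy.2 hz.2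
  right _ _ _ _ hx _ hy _ hz := sbL_sbL_right hx.2 hy.2 hz.2

lemma IsBiLeibniz.add_smul {L : Submodule ℂ (E n)} {f g : E n →ₗ[ℂ] E n →ₗ[ℂ] E n}
    (hf : IsBiLeibniz L f) (hg : IsBiLeibniz L g) (c : ℂ) : IsBiLeibniz L (f + c • g) where
  left α β γ x hx y hy z hz := by
    simp only [LinearMap.add_apply, LinearMap.smul_apply, map_add, map_smul,
      hf.left α β γ x hx y hy z hz, hg.left α β γ x hx y hy z hz]
    module
  right α β γ x hx y hy z hz := by
    simp only [LinearMap.add_apply, LinearMap.smul_apply, map_add, map_smul,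
      hf.right α β γ x hx y hy z hz, hg.right α β γ x hx y hy z hz]
    module

/- Bracketing with `∂_i` lowers the total degree, so the Leibniz rules propagate vanishing upwards
by transitivity. -/
lemma IsBiLeibniz.eq_zero_of_neg_degree {L : Submodule ℂ (E n)} {g : E n →ₗ[ℂ] E n →ₗ[ℂ] E n}
    (hg : IsBiLeibniz L g) (hpd : ∀ i, pd n i ∈ L) (hsb : ∀ i, ∀ x ∈ L, sbL n (pd n i) x ∈ L)
    (hdeg : ∀ j k, ∀ x ∈ L ⊓ edeg n j, ∀ y ∈ L ⊓ edeg n k, g x y ∈ edeg n (j + k))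
    (hone : ∀ j k, ∀ x ∈ L ⊓ edeg n j, ∀ y ∈ L ⊓ edeg n k, g x y (mono n ∅) = 0)
    (hneg : ∀ j k, j + k < 0 → ∀ x ∈ L ⊓ edeg n j, ∀ y ∈ L ⊓ edeg n k, g x y = 0)
    (j k : ℤ) : ∀ x ∈ L ⊓ edeg n j, ∀ y ∈ L ⊓ edeg n k, g x y = 0 := by
  suffices H : ∀ m : ℕ, ∀ j k : ℤ, j + k < m →
      ∀ x ∈ L ⊓ edeg n j, ∀ y ∈ L ⊓ edeg n k, g x y = 0 from
    H ((j + k).toNat + 1) j k (by push_cast; lia)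
  intro m
  induction m with
  | zero => exact hneg
  | succ m ih =>
    intro j k hjk x hx y hy
    rcases lt_or_ge (j + k) 0 with h0 | h0
    · exact hneg j k h0 x hx y hy
    refine eq_zero_of_sbL_pd_eq_zero h0 (hdeg j k x hx y hy) (hone j k x hx y hy) fun i => ?_
    have hi : pd n i ∈ L ⊓ edeg n (-1) := ⟨hpd i, pd_mem_edeg i⟩
    have hbr : ∀ d, ∀ z ∈ L ⊓ edeg n d, sbL n (pd n i) z ∈ L ⊓ edeg n (-1 + d) := fun d z hz =>
      ⟨hsb i z hz.1, sbL_mem_edeg hi.2 hz.2⟩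
    have hpar : ∀ {d : ℤ}, ∀ z ∈ L ⊓ edeg n d, z ∈ L ⊓ epar n d := fun z hz =>
      ⟨hz.1, edeg_le_epar _ hz.2⟩
    push_cast at hjk
    rcases lt_or_ge j 0 with hj | hj
    · have := hg.right _ _ _ x (hpar x hx) _ (hpar _ hi) y (hpar y hy)
      rw [ih _ _ (by lia) x hx _ (hbr k y hy), ih _ _ (by lia) x hx _ hi, map_zero,
        LinearMap.zero_apply, zero_add] at this
      exact (smul_eq_zero.mp this.symm).resolve_left (sgn_ne_zero _)
    · have := hg.left _ _ _ _ (hpar _ hi) x (hpar x hx) y (hpar y hy)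
      rw [ih _ _ (by lia) _ (hbr j x hx) y hy, ih _ _ (by lia) _ hi y hy, map_zero,
        LinearMap.zero_apply, smul_zero, add_zero] at this
      exact this.symm

end BiLeibniz

section SkewMatrices

open Matrix

variable {ι K : Type*} [DecidableEq ι] [Field K]

variable (K) in
/-- The skew-symmetric matrix `E_{ij} - E_{ji}`; these matrices span `𝔰𝔬(ι)`. -/
def skewUnit (i j : ι) : Matrix ι ι K := single i j 1 - single j i 1

lemma skewUnit_swap (i j : ι) : skewUnit K j i = -skewUnit K i j := (neg_sub _ _).symm

variable [Fintype ι]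

lemma skewUnit_mul_apply (i j a b : ι) (M : Matrix ι ι K) :
    (skewUnit K i j * M) a b = (if a = i then M j b else 0) - if a = j then M i b else 0 := by
  simp [skewUnit, sub_mul, Matrix.mul_apply, single_apply, ite_and, eq_comm]

lemma mul_skewUnit_apply (i j a b : ι) (M : Matrix ι ι K) :
    (M * skewUnit K i j) a b = (if b = j then M a i else 0) - if b = i then M a j else 0 := by
  simp [skewUnit, mul_sub, Matrix.mul_apply, single_apply, ite_and, eq_comm]

lemma skewUnit_mul_sub_mul {i j k : ι} (hij : i ≠ j) (hik : i ≠ k) (hjk : j ≠ k) :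
    skewUnit K i k * skewUnit K k j - skewUnit K k j * skewUnit K i k = skewUnit K i j := by
  simp [skewUnit, sub_mul, mul_sub, hij, hik, hjk, hij.symm, hik.symm, hjk.symm]

lemma skewUnit_mulVec_single (i j k : ι) :
    skewUnit K i j *ᵥ Pi.single k 1 =
      (if k = j then Pi.single i 1 else 0) - if k = i then Pi.single j 1 else 0 := by
  ext a
  rw [mulVec_single_one, col_apply]
  split_ifs <;> subst_vars <;> simp_all [skewUnit, single_apply, Pi.single_apply, eq_comm]

section Cocycle

variable {A : ι → ι → Matrix ι ι K}
  (hcocycle : ∀ i j k, i ≠ j → i ≠ k → j ≠ k →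
    A i j = skewUnit K i k * A k j - skewUnit K k j * A i k)
include hcocycle

lemma cocycle_row_eq {i j k : ι} (hij : i ≠ j) (hik : i ≠ k) (hjk : j ≠ k) :
    A i j i = A k j k := by
  ext b
  have := congrFun₂ (hcocycle i j k hij hik hjk) i b
  simpa [skewUnit_mul_apply, hij, hik] using this

variable [NeZero (2 : K)] (hswap : ∀ i j, A j i = -A i j)
include hswap

lemma cocycle_row_eq_zero {i j k : ι} (hij : i ≠ j) (hik : i ≠ k) (hjk : j ≠ k) :
    A i j k = 0 := by
  ext b
  have cyclic : ∀ i j k, i ≠ j → i ≠ k → j ≠ k → A i j k b = A j k i b + A k i j b := by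
    intro i j k hij hik hjk
    have := congrFun₂ (hcocycle i j k hij hik hjk) k b
    simp only [Matrix.sub_apply, skewUnit_mul_apply, hik.symm, hjk.symm, if_true, if_false] at this
    rw [this, hswap j k, hswap i k, Matrix.neg_apply, Matrix.neg_apply]
    ring
  have h : 2 * A i j k b = 0 := by
    linear_combination -cyclic j k i hjk hij.symm hik.symm - cyclic k i j hik.symm hjk.symm hij
  exact (mul_eq_zero.mp h).resolve_left two_ne_zero

lemma exists_eq_skewUnit_mul (hι : 3 ≤ ENat.card ι) :
    ∃ T : Matrix ι ι K, ∀ i j, A i j = skewUnit K i j * T := by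
  have : Nontrivial ι := (ENat.one_lt_card_iff_nontrivial ι).mp (lt_of_lt_of_le (by norm_num) hι)
  choose other hother using exists_ne (α := ι)
  have row : ∀ i j, i ≠ j → A i j i = A (other j) j (other j) := by
    intro i j hij
    by_cases h : i = other j
    · rw [← h]
    · exact cocycle_row_eq hcocycle hij h (hother j).symm
  refine ⟨Matrix.of fun j => A (other j) j (other j), fun i j => ?_⟩
  ext a b
  rw [skewUnit_mul_apply]
  rcases eq_or_ne i j with rfl | hij
  · have := congrFun₂ (hswap i i) a b
    rw [Matrix.neg_apply, eq_neg_iff_add_eq_zero, ← two_mul] at this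
    simpa using (mul_eq_zero.mp this).resolve_left two_ne_zero
  · rcases eq_or_ne a i with rfl | hai
    · simp [row a j hij, hij]
    · rcases eq_or_ne a j with rfl | haj
      · simp [hswap a i, row a i hij.symm, hij.symm]
      · simp [cocycle_row_eq_zero hcocycle hswap hij hai.symm haj.symm, hai, haj]

end Cocycle

lemma scalar_of_skewUnit_cross (hι : 3 ≤ ENat.card ι) {T S : Matrix ι ι K}
    (h : ∀ i j k, i ≠ j → i ≠ k → j ≠ k →
      skewUnit K i j * (T * skewUnit K j k + skewUnit K j k * S) =
        skewUnit K j k * (S * skewUnit K i j + skewUnit K i j * T)) :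
    ∃ c : K, T = c • 1 ∧ S = -(c • 1) := by
  have entry := fun i j k hij hik hjk a b => congrFun₂ (h i j k hij hik hjk) a b
  simp only [skewUnit_mul_apply, mul_skewUnit_apply, Matrix.add_apply] at entry
  have hTS : ∀ j k, j ≠ k → T j j = -S k k := by
    intro j k hjk
    obtain ⟨i, hij, hik⟩ := ENat.exists_ne_ne_of_three_le hι j k
    have := entry i j k hij hik hjk i k
    simp only [hij, hik, hjk, hjk.symm, if_true, if_false] at this
    linear_combination this
  have hT : ∀ i j, i ≠ j → T i j = 0 := by
    intro i j hij
    obtain ⟨k, hki, hkj⟩ := ENat.exists_ne_ne_of_three_le hι i j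
    simpa [hij, hki, hkj, hij.symm, hki.symm, hkj.symm] using
      entry i j k hij hki.symm hkj.symm j k
  have hS : ∀ k i, k ≠ i → S k i = 0 := by
    intro k i hki
    obtain ⟨j, hjk, hji⟩ := ENat.exists_ne_ne_of_three_le hι k i
    simpa [hki, hjk, hji, hki.symm, hjk.symm, hji.symm] using
      entry i j k hji.symm hki.symm hjk i i
  have : Nontrivial ι := (ENat.one_lt_card_iff_nontrivial ι).mp (lt_of_lt_of_le (by norm_num) hι)
  obtain ⟨o⟩ := this.to_nonempty
  have hTo : ∀ i, T i i = T o o := by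
    intro i
    obtain ⟨k, hki, hko⟩ := ENat.exists_ne_ne_of_three_le hι i o
    rw [hTS i k hki.symm, hTS o k hko.symm]
  refine ⟨T o o, ?_, ?_⟩ <;> ext a b <;> rcases eq_or_ne a b with rfl | hab
  · simp [hTo]
  · simp [hT a b hab, hab]
  · obtain ⟨j, hja, -⟩ := ENat.exists_ne_ne_of_three_le hι a a
    simp [← hTo j, hTS j a hja]
  · simp [hS a b hab, hab]

end SkewMatrices

section Frame

/-- Together with `frameCoeff'`, the coefficients of the vectors `frame`: they satisfy
`2ab = 1` and `a² + b² = 0`, which makes `aX + bX'` and `aX' + bX` orthonormal when `X`, `X'` is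
a hyperbolic pair, and `aX + bX = X`. -/
def frameCoeff : ℂ := (1 - Complex.I) / 2

/-- The second coefficient of the vectors `frame`; see `frameCoeff`. -/
def frameCoeff' : ℂ := (1 + Complex.I) / 2

/-- The orthonormal basis of `H(n)_{-1}` with respect to the form pairing `∂_i` with `∂_{i'}`. -/
def frame (k : Fin n) : E n := frameCoeff • pd n k + frameCoeff' • pd n (cidx n k)

/-- The basis of `Λ(n)_1` dual to `frame`. -/
def coframe (k : Fin n) : Lambda n :=
  frameCoeff • mono n {cidx n k} + frameCoeff' • mono n {k}

/-- The element of `H(n)_0` acting on the orthonormal basis `frame` as `skewUnit`. -/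
def rotation (i j : Fin n) : E n := DHmap n (mulOp n (coframe n j) (coframe n i))

/-- The element of `H(n)_{-1}` with the given coordinates in the basis `frame`. -/
def translation : (Fin n → ℂ) →ₗ[ℂ] E n := Fintype.linearCombination ℂ (frame n)

/-- The coordinates of an element of `H(n)_{-1}` in the basis `frame`. -/
def coord : E n →ₗ[ℂ] Fin n → ℂ :=
  LinearMap.pi fun l => LinearMap.proj ∅ ∘ₗ LinearMap.applyₗ (coframe n l)

variable {n}

lemma frameCoeff_smul_add {M : Type*} [AddCommGroup M] [Module ℂ M] (X Y : M) :
    frameCoeff • (frameCoeff • X + frameCoeff' • Y) +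
      frameCoeff' • (frameCoeff • Y + frameCoeff' • X) = Y := by
  rw [frameCoeff, frameCoeff']
  match_scalars
  · linear_combination (1 / 2 : ℂ) * Complex.I_mul_I
  · linear_combination (-1 / 2 : ℂ) * Complex.I_mul_I

lemma pd_eq_frame (k : Fin n) :
    pd n k = frameCoeff • frame n (cidx n k) + frameCoeff' • frame n k := by
  rw [frame, frame, cidx_cidx]
  exact (frameCoeff_smul_add _ _).symm

lemma mono_single_eq_coframe (k : Fin n) :
    mono n {k} = frameCoeff • coframe n k + frameCoeff' • coframe n (cidx n k) := by
  rw [coframe, coframe, cidx_cidx, frameCoeff_smul_add]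

lemma frame_apply_coframe (k j : Fin n) :
    frame n k (coframe n j) = if k = j then mono n ∅ else 0 := by
  have hinj : cidx n k = cidx n j ↔ k = j := (Function.LeftInverse.injective cidx_cidx).eq_iff
  have hswap : cidx n k = j ↔ k = cidx n j :=
    ⟨fun h => by rw [← h, cidx_cidx], fun h => by rw [h, cidx_cidx]⟩
  simp only [frame, coframe, LinearMap.add_apply, LinearMap.smul_apply, map_add, map_smul,
    pd_mono_single, hinj, hswap]
  exact frameCoeff_smul_add _ _

lemma coframe_mem_ldeg (k : Fin n) : coframe n k ∈ ldeg n 1 := by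
  have h : ∀ i : Fin n, mono n {i} ∈ ldeg n 1 := fun i => by simpa using mono_mem_ldeg {i}
  exact Submodule.add_mem _ (Submodule.smul_mem _ _ (h _)) (Submodule.smul_mem _ _ (h _))

lemma par_coframe (k : Fin n) : par n (coframe n k) = -coframe n k := by
  rw [coframe, map_add, map_smul, map_smul, par_mono_single, par_mono_single]
  module

lemma DHmap_coframe (k : Fin n) : DHmap n (coframe n k) = -frame n k := by
  rw [coframe, frame, map_add, map_smul, map_smul, DHmap_mono_single, DHmap_mono_single, cidx_cidx]
  module

lemma mulOp_coframe_mem_ldeg (i j : Fin n) : mulOp n (coframe n j) (coframe n i) ∈ ldeg n 2 :=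
  mulOp_mem_edeg (coframe_mem_ldeg j) _ _ (coframe_mem_ldeg i)

lemma rotation_mem_grade (hn : 3 ≤ n) (i j : Fin n) : rotation n i j ∈ CT.H.grade n 0 := by
  have hdeg := mulOp_coframe_mem_ldeg i j
  refine ⟨⟨_, hdeg _ ?_, rfl⟩, DHmap_mem_edeg hdeg⟩
  rw [Finset.card_univ, Fintype.card_fin]
  lia

lemma rotation_mem_edeg (i j : Fin n) : rotation n i j ∈ edeg n 0 :=
  DHmap_mem_edeg (mulOp_coframe_mem_ldeg i j)

lemma translation_single (k : Fin n) : translation n (Pi.single k 1) = frame n k := by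
  rw [translation, Fintype.linearCombination_apply_single, one_smul]

lemma frame_mem_edeg (k : Fin n) : frame n k ∈ edeg n (-1) :=
  Submodule.add_mem _ (Submodule.smul_mem _ _ (pd_mem_edeg _))
    (Submodule.smul_mem _ _ (pd_mem_edeg _))

lemma translation_mem_edeg (v : Fin n → ℂ) : translation n v ∈ edeg n (-1) := by
  rw [translation, Fintype.linearCombination_apply]
  exact Submodule.sum_mem _ fun k _ => Submodule.smul_mem _ _ (frame_mem_edeg k)

lemma translation_mem_grade (hn : 1 < n) (v : Fin n → ℂ) :
    translation n v ∈ CT.H.grade n (-1) := by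
  rw [translation, Fintype.linearCombination_apply]
  exact Submodule.sum_mem _ fun k _ => Submodule.smul_mem _ _ <|
    Submodule.add_mem _ (Submodule.smul_mem _ _ (pd_mem_grade hn _))
      (Submodule.smul_mem _ _ (pd_mem_grade hn _))

lemma frame_mem_range_translation (k : Fin n) : frame n k ∈ LinearMap.range (translation n) :=
  ⟨_, translation_single k⟩

lemma pd_mem_range_translation (k : Fin n) : pd n k ∈ LinearMap.range (translation n) := by
  rw [pd_eq_frame]
  exact Submodule.add_mem _ (Submodule.smul_mem _ _ (frame_mem_range_translation _))
    (Submodule.smul_mem _ _ (frame_mem_range_translation _))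

lemma coord_translation (v : Fin n → ℂ) : coord n (translation n v) = v := by
  suffices coord n ∘ₗ translation n = LinearMap.id from LinearMap.congr_fun this v
  refine (Pi.basisFun ℂ (Fin n)).ext fun k => ?_
  rw [Pi.basisFun_apply, LinearMap.comp_apply, translation_single, LinearMap.id_apply]
  ext l
  change frame n k (coframe n l) ∅ = _
  rw [frame_apply_coframe]
  by_cases h : k = l
  · simp [h, mono]
  · simp [h, Ne.symm h]

lemma translation_coord {x : E n} (hx : x ∈ CT.H.grade n (-1)) :
    translation n (coord n x) = x := by
  suffices x ∈ LinearMap.range (translation n) by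
    obtain ⟨v, rfl⟩ := this
    rw [coord_translation]
  obtain ⟨h, hh, -, -, rfl⟩ := exists_DHmap_eq_of_mem_grade hx
  suffices hle : ldeg n (-1 + 2) ≤ (LinearMap.range (translation n)).comap (DHmap n) from hle hh
  refine ldeg_le_of_mono_mem fun S hS => ?_
  obtain ⟨i, rfl⟩ := Finset.card_eq_one.mp (show S.card = 1 by lia)
  rw [Submodule.mem_comap, DHmap_mono_single]
  exact Submodule.neg_mem _ (pd_mem_range_translation _)

lemma sbL_frame_DHmap (k : Fin n) (g : Lambda n) :
    sbL n (frame n k) (DHmap n g) = DHmap n (frame n k g) := by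
  simp only [frame, LinearMap.add_apply, LinearMap.smul_apply, map_add, map_smul, sbL_pd_DHmap]

lemma frame_apply_mulOp (k : Fin n) (f g : Lambda n) :
    frame n k (mulOp n f g) = mulOp n (frame n k f) g + mulOp n (par n f) (frame n k g) := by
  simp only [frame, LinearMap.add_apply, LinearMap.smul_apply, map_add, map_smul, pd_mulOp_apply]
  module

lemma sbL_frame_frame (k l : Fin n) : sbL n (frame n k) (frame n l) = 0 := by
  rw [← neg_neg (frame n l), ← DHmap_coframe, map_neg, sbL_frame_DHmap, frame_apply_coframe]
  split_ifs <;> simp [DHmap_mono_empty]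

lemma sbL_translation_translation (v w : Fin n → ℂ) :
    sbL n (translation n v) (translation n w) = 0 := by
  simp [translation, Fintype.linearCombination_apply, sbL_frame_frame]

lemma sbL_frame_rotation (k i j : Fin n) : sbL n (frame n k) (rotation n i j) =
    (if k = i then frame n j else 0) - if k = j then frame n i else 0 := by
  rw [rotation, sbL_frame_DHmap, frame_apply_mulOp, frame_apply_coframe, frame_apply_coframe,
    par_coframe]
  split_ifs <;> simp [mulOp_mono_empty, mulOp_apply_mono_empty, DHmap_coframe, neg_add_eq_sub]

lemma sbL_swap_of_mem_edeg_zero {d : ℤ} {B x : E n} (hB : B ∈ edeg n 0) (hx : x ∈ edeg n d) :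
    sbL n x B = -sbL n B x := by
  rw [sbL_swap (edeg_le_epar _ hB) (edeg_le_epar _ hx), Int.cast_zero, zero_mul, sgn_zero]
  module

lemma sbL_rotation_translation (i j : Fin n) (v : Fin n → ℂ) :
    sbL n (rotation n i j) (translation n v) =
      translation n ((skewUnit ℂ i j).mulVec v) := by
  suffices sbL n (rotation n i j) ∘ₗ translation n =
      translation n ∘ₗ Matrix.toLin' (skewUnit ℂ i j) from LinearMap.congr_fun this v
  refine (Pi.basisFun ℂ (Fin n)).ext fun k => ?_
  rw [Pi.basisFun_apply, LinearMap.comp_apply, LinearMap.comp_apply, Matrix.toLin'_apply,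
    skewUnit_mulVec_single, translation_single, map_sub,
    ← neg_neg (sbL n (rotation n i j) (frame n k)),
    ← sbL_swap_of_mem_edeg_zero (rotation_mem_edeg i j) (frame_mem_edeg k), sbL_frame_rotation]
  split_ifs <;> simp [translation_single]

lemma sbL_translation_rotation (i j : Fin n) (v : Fin n → ℂ) :
    sbL n (translation n v) (rotation n i j) =
      translation n (-(skewUnit ℂ i j).mulVec v) := by
  rw [sbL_swap_of_mem_edeg_zero (rotation_mem_edeg i j) (translation_mem_edeg v),
    sbL_rotation_translation, map_neg]

lemma eq_of_sbL_translation_eq {D F : E n} (hD : D ∈ edeg n 0) (hF : F ∈ edeg n 0)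
    (hone : D (mono n ∅) = F (mono n ∅))
    (h : ∀ v, sbL n D (translation n v) = sbL n F (translation n v)) : D = F := by
  rw [← sub_eq_zero]
  refine eq_zero_of_sbL_pd_eq_zero le_rfl (Submodule.sub_mem _ hD hF)
    (by rw [LinearMap.sub_apply, hone, sub_self]) fun k => ?_
  obtain ⟨v, hv⟩ := pd_mem_range_translation k
  rw [← hv, map_sub, sbL_swap_of_mem_edeg_zero hD (translation_mem_edeg v),
    sbL_swap_of_mem_edeg_zero hF (translation_mem_edeg v), h, sub_self]

lemma rotation_apply_mono_empty (i j : Fin n) : rotation n i j (mono n ∅) = 0 :=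
  DHmap_apply_mono_empty _

lemma rotation_swap (i j : Fin n) : rotation n j i = -rotation n i j := by
  refine eq_of_sbL_translation_eq (rotation_mem_edeg j i)
    (Submodule.neg_mem _ (rotation_mem_edeg i j)) ?_ fun v => ?_
  · rw [LinearMap.neg_apply, rotation_apply_mono_empty, rotation_apply_mono_empty, neg_zero]
  · rw [map_neg, LinearMap.neg_apply, sbL_rotation_translation, sbL_rotation_translation,
      skewUnit_swap, Matrix.neg_mulVec, map_neg]

lemma sbL_rotation_rotation {i j k : Fin n} (hij : i ≠ j) (hik : i ≠ k) (hjk : j ≠ k) :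
    sbL n (rotation n i k) (rotation n k j) = rotation n i j := by
  have hpar : ∀ a b, rotation n a b ∈ epar n 0 := fun a b => by
    simpa using edeg_le_epar 0 (rotation_mem_edeg a b)
  refine eq_of_sbL_translation_eq
    (sbL_mem_edeg (rotation_mem_edeg i k) (rotation_mem_edeg k j)) (rotation_mem_edeg i j) ?_
    fun v => ?_
  · rw [sbL_mono_empty (hpar _ _) (hpar _ _) (rotation_apply_mono_empty _ _)
      (rotation_apply_mono_empty _ _), rotation_apply_mono_empty]
  · rw [sbL_sbL_left (hpar _ _) (hpar _ _) (edeg_le_epar _ (translation_mem_edeg v)),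
      zero_mul, sgn_zero, one_smul, sbL_rotation_translation, sbL_rotation_translation,
      sbL_rotation_translation, sbL_translation_rotation, sbL_rotation_translation, ← map_add,
      ← sub_eq_add_neg, Matrix.mulVec_mulVec, Matrix.mulVec_mulVec, ← Matrix.sub_mulVec,
      skewUnit_mul_sub_mul hij hik hjk]

lemma grade_zero_le_of_rotation_mem {M : Submodule ℂ (E n)} (hM : ∀ i j, rotation n i j ∈ M) :
    CT.H.grade n 0 ≤ M := by
  intro x hx
  obtain ⟨h, hh, -, -, rfl⟩ := exists_DHmap_eq_of_mem_grade hx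
  suffices hle : ldeg n (0 + 2) ≤ M.comap (DHmap n) from hle hh
  refine ldeg_le_of_mono_mem fun S hS => ?_
  obtain ⟨a, b, hab, rfl⟩ := Finset.card_eq_two.mp (show S.card = 2 by lia)
  have hmul := mulOp_mono_mono (Finset.disjoint_singleton.mpr hab)
  rw [← Finset.insert_eq] at hmul
  rw [Submodule.mem_comap, ← one_smul ℂ (mono n {a, b}),
    ← msign_mul_self (inversions n {a} {b}), mul_smul, ← hmul, map_smul, mono_single_eq_coframe a,
    mono_single_eq_coframe b]
  simp only [map_add, map_smul, LinearMap.add_apply, LinearMap.smul_apply]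
  refine M.smul_mem _ (M.add_mem ?_ ?_) <;>
    exact M.smul_mem _ (M.add_mem (M.smul_mem _ (hM _ _)) (M.smul_mem _ (hM _ _)))

end Frame

section LowDegree

variable {n}

/-- The matrix, in the basis `frame`, of the map induced by `φ` on `H(n)_{-1}`. -/
def inducedMatrix (φ : E n →ₗ[ℂ] E n) : Matrix (Fin n) (Fin n) ℂ :=
  LinearMap.toMatrix' (coord n ∘ₗ φ ∘ₗ translation n)

lemma translation_inducedMatrix_mulVec {φ : E n →ₗ[ℂ] E n} {v : Fin n → ℂ}
    (hφ : φ (translation n v) ∈ CT.H.grade n (-1)) :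
    translation n ((inducedMatrix φ).mulVec v) = φ (translation n v) := by
  rw [inducedMatrix, LinearMap.toMatrix'_mulVec, LinearMap.comp_apply, LinearMap.comp_apply,
    translation_coord hφ]

lemma eq_of_forall_translation_mulVec_eq {M N : Matrix (Fin n) (Fin n) ℂ}
    (h : ∀ v, translation n (M.mulVec v) = translation n (N.mulVec v)) : M = N :=
  Matrix.mulVec_injective (funext fun v => Function.LeftInverse.injective coord_translation (h v))

lemma inducedMatrix_neg (φ : E n →ₗ[ℂ] E n) : inducedMatrix (-φ) = -inducedMatrix φ := by
  rw [inducedMatrix, LinearMap.neg_comp, LinearMap.comp_neg, map_neg, inducedMatrix]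

section

variable {f : E n →ₗ[ℂ] E n →ₗ[ℂ] E n} (hf : IsBiLeibniz (Hn n) f) (hd : CT.H.HasDeg n f 0)
  (hn : 3 ≤ n)

include hd

lemma CT.HasDeg.apply_mem_grade {j k : ℤ} {x y : E n} (hx : x ∈ CT.H.grade n j)
    (hy : y ∈ CT.H.grade n k) : f x y ∈ CT.H.grade n (j + k) := by
  simpa only [zero_add] using hd j k x hx y hy

lemma CT.HasDeg.apply_eq_zero_of_mem_grade_neg_one {x y : E n} (hx : x ∈ CT.H.grade n (-1))
    (hy : y ∈ CT.H.grade n (-1)) : f x y = 0 :=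
  eq_zero_of_mem_grade (hd.apply_mem_grade hx hy) (Or.inl (by norm_num))

include hn

lemma translation_inducedMatrix_left_mulVec (i j : Fin n) (v : Fin n → ℂ) :
    translation n ((inducedMatrix (f (rotation n i j))).mulVec v) =
      f (rotation n i j) (translation n v) :=
  translation_inducedMatrix_mulVec <| by
    simpa only [zero_add] using
      hd.apply_mem_grade (rotation_mem_grade hn i j) (translation_mem_grade (by lia) v)

lemma translation_inducedMatrix_right_mulVec (i j : Fin n) (v : Fin n → ℂ) :
    translation n ((inducedMatrix (f.flip (rotation n i j))).mulVec v) =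
      f (translation n v) (rotation n i j) :=
  translation_inducedMatrix_mulVec (φ := f.flip (rotation n i j)) <| by
    simpa only [add_zero, LinearMap.flip_apply] using
      hd.apply_mem_grade (translation_mem_grade (by lia) v) (rotation_mem_grade hn i j)

include hf

lemma inducedMatrix_left_cocycle {i j k : Fin n} (hij : i ≠ j) (hik : i ≠ k) (hjk : j ≠ k) :
    inducedMatrix (f (rotation n i j)) =
      skewUnit ℂ i k * inducedMatrix (f (rotation n k j)) -
        skewUnit ℂ k j * inducedMatrix (f (rotation n i k)) := by
  refine eq_of_forall_translation_mulVec_eq fun v => ?_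
  have h := hf.left _ _ _ _ (grade_le_epar (rotation_mem_grade hn i k)) _
    (grade_le_epar (rotation_mem_grade hn k j)) _
    (grade_le_epar (translation_mem_grade (by lia) v))
  rw [sbL_rotation_rotation hij hik hjk, Int.cast_zero, zero_mul, sgn_zero, one_smul,
    ← translation_inducedMatrix_left_mulVec hd hn, ← translation_inducedMatrix_left_mulVec hd hn,
    ← translation_inducedMatrix_left_mulVec hd hn, sbL_rotation_translation,
    sbL_translation_rotation, ← map_add] at h
  rw [h, Matrix.sub_mulVec, Matrix.mulVec_mulVec, Matrix.mulVec_mulVec, sub_eq_add_neg]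

lemma inducedMatrix_right_cocycle {i j k : Fin n} (hij : i ≠ j) (hik : i ≠ k) (hjk : j ≠ k) :
    inducedMatrix (f.flip (rotation n i j)) =
      skewUnit ℂ i k * inducedMatrix (f.flip (rotation n k j)) -
        skewUnit ℂ k j * inducedMatrix (f.flip (rotation n i k)) := by
  refine eq_of_forall_translation_mulVec_eq fun v => ?_
  have h := hf.right _ _ _ _ (grade_le_epar (translation_mem_grade (by lia) v)) _
    (grade_le_epar (rotation_mem_grade hn i k)) _ (grade_le_epar (rotation_mem_grade hn k j))
  rw [sbL_rotation_rotation hij hik hjk, Int.cast_zero, mul_zero, sgn_zero, one_smul,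
    ← translation_inducedMatrix_right_mulVec hd hn, ← translation_inducedMatrix_right_mulVec hd hn,
    ← translation_inducedMatrix_right_mulVec hd hn, sbL_rotation_translation,
    sbL_translation_rotation, ← map_add] at h
  rw [h, Matrix.sub_mulVec, Matrix.mulVec_mulVec, Matrix.mulVec_mulVec, sub_eq_add_neg, add_comm]

/- Both sides are the matrix of the bracket with `f(R, R')`, for `R` and `R'` the rotations with
indices `i, j` and `k, l`. -/
lemma inducedMatrix_cross (i j k l : Fin n) :
    inducedMatrix (f (rotation n i j)) * skewUnit ℂ k l -
        skewUnit ℂ k l * inducedMatrix (f (rotation n i j)) =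
      inducedMatrix (f.flip (rotation n k l)) * skewUnit ℂ i j -
        skewUnit ℂ i j * inducedMatrix (f.flip (rotation n k l)) := by
  refine eq_of_forall_translation_mulVec_eq fun v => ?_
  have hR := grade_le_epar (rotation_mem_grade hn i j)
  have hR' := grade_le_epar (rotation_mem_grade hn k l)
  have hv := grade_le_epar (translation_mem_grade (by lia : 1 < n) v)
  have hright := hf.right _ _ _ _ hR _ hR' _ hv
  have hleft := hf.left _ _ _ _ hR _ hv _ hR'
  rw [sbL_rotation_translation, Int.cast_zero, mul_zero, sgn_zero, one_smul] at hright hleft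
  rw [← translation_inducedMatrix_left_mulVec hd hn, ← translation_inducedMatrix_left_mulVec hd hn,
    sbL_rotation_translation, ← sub_eq_iff_eq_add, ← map_sub] at hright
  rw [← translation_inducedMatrix_right_mulVec hd hn,
    ← translation_inducedMatrix_right_mulVec hd hn, sbL_rotation_translation,
    ← sub_eq_iff_eq_add', ← map_sub] at hleft
  simp only [Matrix.sub_mulVec, ← Matrix.mulVec_mulVec]
  exact hright.trans hleft.symm

lemma exists_inducedMatrix_eq_smul : ∃ c : ℂ, ∀ i j,
    inducedMatrix (f (rotation n i j)) = c • skewUnit ℂ i j ∧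
      inducedMatrix (f.flip (rotation n i j)) = -(c • skewUnit ℂ i j) := by
  have hcard : 3 ≤ ENat.card (Fin n) := by simpa using hn
  obtain ⟨T, hT⟩ := exists_eq_skewUnit_mul
    (fun _ _ _ => inducedMatrix_left_cocycle hf hd hn)
    (fun i j => by rw [rotation_swap i j, map_neg, inducedMatrix_neg]) hcard
  obtain ⟨S, hS⟩ := exists_eq_skewUnit_mul
    (fun _ _ _ => inducedMatrix_right_cocycle hf hd hn)
    (fun i j => by rw [rotation_swap i j, map_neg, inducedMatrix_neg]) hcard
  obtain ⟨c, rfl, rfl⟩ := scalar_of_skewUnit_cross hcard (T := T) (S := S) fun i j k _ _ _ => by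
    have := inducedMatrix_cross hf hd hn i j j k
    rw [hT, hS, sub_eq_sub_iff_add_eq_add] at this
    simp only [mul_add, ← mul_assoc] at this ⊢
    rw [this, add_comm]
  exact ⟨c, fun i j => ⟨by simp [hT], by simp [hS]⟩⟩

lemma exists_eq_smul_sbL_of_grade : ∃ c : ℂ,
    ∀ x ∈ CT.H.grade n 0, ∀ y ∈ CT.H.grade n (-1),
      f x y = c • sbL n x y ∧ f y x = c • sbL n y x := by
  obtain ⟨c, hc⟩ := exists_inducedMatrix_eq_smul hf hd hn
  refine ⟨c, fun x hx y hy => ?_⟩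
  rw [← translation_coord hy]
  generalize coord n y = v
  constructor
  · suffices CT.H.grade n 0 ≤ LinearMap.eqLocus (f.flip (translation n v))
      (c • (sbL n).flip (translation n v)) from this hx
    refine grade_zero_le_of_rotation_mem fun i j => ?_
    change f (rotation n i j) (translation n v) = c • sbL n (rotation n i j) (translation n v)
    rw [← translation_inducedMatrix_left_mulVec hd hn, (hc i j).1, sbL_rotation_translation,
      Matrix.smul_mulVec, map_smul]
  · suffices CT.H.grade n 0 ≤ LinearMap.eqLocus (f (translation n v))
      (c • sbL n (translation n v)) from this hx
    refine grade_zero_le_of_rotation_mem fun i j => ?_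
    change f (translation n v) (rotation n i j) = c • sbL n (translation n v) (rotation n i j)
    rw [← translation_inducedMatrix_right_mulVec hd hn, (hc i j).2, sbL_translation_rotation,
      Matrix.neg_mulVec, Matrix.smul_mulVec, ← smul_neg, map_smul]

lemma exists_eq_smul_sbL_of_neg_degree : ∃ c : ℂ, ∀ {j k : ℤ}, j + k < 0 →
    ∀ x ∈ CT.H.grade n j, ∀ y ∈ CT.H.grade n k, f x y = c • sbL n x y := by
  obtain ⟨c, hc⟩ := exists_eq_smul_sbL_of_grade hf hd hn
  refine ⟨c, fun {j k} hjk x hx y hy => ?_⟩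
  rcases lt_or_ge j (-1) with hj | hj
  · simp [eq_zero_of_mem_grade hx (Or.inl hj)]
  rcases lt_or_ge k (-1) with hk | hk
  · simp [eq_zero_of_mem_grade hy (Or.inl hk)]
  obtain ⟨rfl, rfl⟩ | ⟨rfl, rfl⟩ | ⟨rfl, rfl⟩ :
      (j = 0 ∧ k = -1) ∨ (j = -1 ∧ k = 0) ∨ (j = -1 ∧ k = -1) := by lia
  · exact (hc x hx y hy).1
  · exact (hc y hy x hx).2
  · rw [hd.apply_eq_zero_of_mem_grade_neg_one hx hy, ← translation_coord hx,
      ← translation_coord hy, sbL_translation_translation, smul_zero]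

lemma IsBiLeibniz.exists_eq_smul_sbL :
    ∃ c : ℂ, ∀ x ∈ Hn n, ∀ y ∈ Hn n, f x y = c • sbL n x y := by
  obtain ⟨c, hc⟩ := exists_eq_smul_sbL_of_neg_degree hf hd hn
  refine ⟨c, fun x hx y hy => ?_⟩
  suffices ∀ j k, ∀ x ∈ CT.H.grade n j, ∀ y ∈ CT.H.grade n k, (f + (-c) • sbL n) x y = 0 by
    have := apply_apply_eq_zero_of_grade this x hx y hy
    rwa [LinearMap.add_apply, LinearMap.add_apply, LinearMap.smul_apply, LinearMap.smul_apply,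
      neg_smul, ← sub_eq_add_neg, sub_eq_zero] at this
  refine (hf.add_smul (isBiLeibniz_sbL (Hn n)) (-c)).eq_zero_of_neg_degree
    (fun i => (pd_mem_grade (by lia) i).1) (fun i _ hx => sbL_pd_mem_Hn i hx)
    (fun j k x hx y hy => ?_) (fun j k x hx y hy => ?_) (fun j k hjk x hx y hy => ?_)
  · exact Submodule.add_mem _ (hd.apply_mem_grade hx hy).2
      (Submodule.smul_mem _ _ (sbL_mem_edeg hx.2 hy.2))
  · have hbr := sbL_mono_empty (grade_le_epar hx).2 (grade_le_epar hy).2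
      (apply_mono_empty_of_mem_Hn hx.1) (apply_mono_empty_of_mem_Hn hy.1)
    simp [apply_mono_empty_of_mem_Hn (hd.apply_mem_grade hx hy).1, hbr]
  · rw [LinearMap.add_apply, LinearMap.add_apply, hc hjk x hx y hy, LinearMap.smul_apply,
      LinearMap.smul_apply, neg_smul, add_neg_cancel]

end

end LowDegree

theorem superBider_H_zero_degree_inner_general (n : ℕ)
    (pf : ZMod 2) (f : E n →ₗ[ℂ] E n →ₗ[ℂ] E n)
    (hf : IsSuperBider n (CT.H.algebra n) pf f)
    (hd : CT.H.HasDeg n f 0) :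
    ∃ lam : ℂ, ∀ x ∈ CT.H.algebra n, ∀ y ∈ CT.H.algebra n, f x y = lam • sbL n x y := by
  suffices hzero : pf ≠ 0 ∨ n < 3 →
      ∀ j k, ∀ x ∈ CT.H.grade n j, ∀ y ∈ CT.H.grade n k, f x y = 0 by
    by_cases h : pf ≠ 0 ∨ n < 3
    · exact ⟨0, fun x hx y hy => by
        rw [apply_apply_eq_zero_of_grade (hzero h) x hx y hy, zero_smul]⟩
    · obtain ⟨rfl, hn⟩ : pf = 0 ∧ 3 ≤ n := by simpa using h
      exact hf.isBiLeibniz.exists_eq_smul_sbL hd hn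
  rintro (hpf | hn) j k x hx y hy
  · have hpar := hf.maps _ _ x (grade_le_epar hx) y (grade_le_epar hy)
    refine eq_zero_of_mem_edeg_of_mem_epar (hd j k x hx y hy).2 hpar.2 fun h => hpf ?_
    simpa using h
  · rcases eq_or_ne j (-1) with rfl | hj
    · rcases eq_or_ne k (-1) with rfl | hk
      · exact hd.apply_eq_zero_of_mem_grade_neg_one hx hy
      · rw [eq_zero_of_mem_grade hy (by lia), map_zero]
    · rw [eq_zero_of_mem_grade hx (by lia), map_zero, LinearMap.zero_apply]

/-- For `L = H(n)`, `n > 4`, a super-biderivation `f ∈ BDer(L)_0` of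
ℤ-degree `0` is inner: there is `λ ∈ ℂ` with `f(x,y) = λ[x,y]` for all `x, y ∈ L`. -/
theorem superBider_H_zero_degree_inner (n : ℕ) (hn : 4 < n)
    (pf : ZMod 2) (f : E n →ₗ[ℂ] E n →ₗ[ℂ] E n)
    (hf : IsSuperBider n (CT.H.algebra n) pf f)
    (hd : CT.H.HasDeg n f 0) :
    ∃ lam : ℂ, ∀ x ∈ CT.H.algebra n, ∀ y ∈ CT.H.algebra n, f x y = lam • sbL n x y :=
  superBider_H_zero_degree_inner_general n pf f hf hd

end CartanSuper
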